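/- Let μ be a complex measure on ℝ^d which is a temperate distribution and whose distributional Fourier transform is a pure point measure μ̂ = Σ_{γ∈Γ} b_γ δ_γ. Then for every C^∞ compactly supported function φ on ℝ^d, the convolution of μ with the inverse Fourier transform φ̌ satisfies (μ⋆φ̌)(t) = Σ_{γ ∈ Γ ∩ supp φ} b_γ φ(γ) e^{2πi t·γ} for all t ∈ ℝ^d, where Σ_{γ ∈ Γ ∩ supp φ} |b_γ| |φ(γ)| < ∞; in particular μ⋆φ̌ is a Bohr almost periodic function. -/

import Mathlib

open MeasureTheory Metric Filter Topology Complex SchwartzMap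
open scoped RealInnerProductSpace ENNReal

noncomputable section

/-- A continuous function `g` is *Bohr almost periodic* if for every `ε > 0` its set of
`ε`-almost periods is relatively dense. -/
def IsBohrAP {V : Type*} [SeminormedAddCommGroup V] (g : V → ℂ) : Prop :=
  Continuous g ∧ ∀ ε : ℝ, 0 < ε → ∃ L : ℝ, 0 < L ∧ ∀ x : V, ∃ τ : V,
    dist τ x < L ∧ ∀ y : V, ‖g (y + τ) - g y‖ < ε

/-- A (locally finite) complex measure on `V`, given by its polar decomposition: the total
variation measure `var` together with a unimodular density `den`, so that
`μ(A) = ∫_A den d(var)`. -/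
structure CMeas (V : Type*) [MeasurableSpace V] where
  var : Measure V
  den : V → ℂ
  norm_den : ∀ x, ‖den x‖ = 1
  measurable_den : Measurable den

namespace CMeas

variable {V : Type*} [MeasurableSpace V]

/-- Pairing of a complex measure with a test function: `∫ f dμ = ∫ f·den d(var)`. -/
def pair (μ : CMeas V) (f : V → ℂ) : ℂ := ∫ x, f x * μ.den x ∂μ.var

/-- Local finiteness: finite total variation on compact sets. -/
def locFinite [TopologicalSpace V] (μ : CMeas V) : Prop :=
  ∀ K : Set V, IsCompact K → μ.var K < ⊤

end CMeas

/-- Euclidean space `ℝ^d`. -/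
abbrev Ed (d : ℕ) := EuclideanSpace ℝ (Fin d)

variable {d : ℕ}

/-- The complex measure is a temperate measure: every Schwartz function is integrable with
respect to its total variation. -/
def CMeas.temperate (μ : CMeas (Ed d)) : Prop :=
  ∀ φ : SchwartzMap (Ed d) ℂ, Integrable (fun x => φ x * μ.den x) μ.var

/-- A pure point complex measure on `V`, described by its (countably supported) mass function. -/
structure PPM (V : Type*) where
  mass : V → ℂ
  countable : (Function.support mass).Countable

/-- The total variation of a pure point measure, evaluated on a set. -/
def PPM.var {V : Type*} (μ : PPM V) (A : Set V) : ℝ≥0∞ :=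
  ∑' x : A, (‖μ.mass x‖₊ : ℝ≥0∞)

/-- Pairing of a pure point measure with a test function. -/
def PPM.pair {V : Type*} (μ : PPM V) (φ : V → ℂ) : ℂ := ∑' x, μ.mass x * φ x

/-- Local finiteness of a pure point measure. -/
def PPM.locFinite (μ : PPM (Ed d)) : Prop := ∀ r : ℝ, μ.var (ball 0 r) < ⊤

/-!
Translation by `t` on the Fourier side is modulation by `e^{2πi t·γ}`: for test functions,
`φ̌(t - ·)` is the Fourier transform of `γ ↦ e^{2πi t·γ} φ(γ)`, so pairing it with `μ` and using
`μ̂ = Σ_γ b_γ δ_γ` gives the expansion of `μ ⋆ φ̌`. Its absolute convergence follows from the local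
finiteness of `μ̂`, and makes `μ ⋆ φ̌` a uniform limit of trigonometric polynomials. A trigonometric
polynomial factors through a homomorphism from `ℝ^d` into a compact torus, where total boundedness
yields a relatively dense set of almost periods.
-/

section BohrAlmostPeriodic

/-- A set is *relatively dense* if the balls of some fixed radius all meet it. Written in the form
in which `IsBohrAP` asks it of the `ε`-almost periods. -/
def IsRelativelyDense {X : Type*} [PseudoMetricSpace X] (S : Set X) : Prop :=
  ∃ L : ℝ, 0 < L ∧ ∀ x : X, ∃ τ : X, dist τ x < L ∧ τ ∈ S

lemma IsRelativelyDense.mono {X : Type*} [PseudoMetricSpace X] {S T : Set X}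
    (hS : IsRelativelyDense S) (hST : S ⊆ T) : IsRelativelyDense T :=
  let ⟨L, hL, hLS⟩ := hS
  ⟨L, hL, fun x ↦ let ⟨τ, hτx, hτ⟩ := hLS x; ⟨τ, hτx, hST hτ⟩⟩

variable {V K ι : Type*} [SeminormedAddCommGroup V]

lemma isBohrAP_iff_isRelativelyDense {g : V → ℂ} :
    IsBohrAP g ↔ Continuous g ∧
      ∀ ε : ℝ, 0 < ε → IsRelativelyDense {τ | ∀ y, dist (g (y + τ)) (g y) < ε} := by
  simp only [IsBohrAP, IsRelativelyDense, Set.mem_ofPred_eq, dist_eq_norm]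

/- If `χ p₁, …, χ pₙ` is a `δ`-net of the range of `χ`, then every `x` has some `χ pᵢ` within `δ` of
`χ x`, and by invariance of the metric `χ (-pᵢ + x)` is then within `δ` of `1`. -/
lemma isRelativelyDense_dist_addChar_one_lt [Group K] [PseudoMetricSpace K]
    [IsIsometricSMul K K] {χ : AddChar V K} (hχ : TotallyBounded (Set.range χ)) {δ : ℝ}
    (hδ : 0 < δ) : IsRelativelyDense {τ | dist (χ τ) 1 < δ} := by
  obtain ⟨s, -, hs, hcover⟩ : ∃ s ⊆ Set.univ, s.Finite ∧ Set.range χ ⊆ ⋃ y ∈ χ '' s, ball y δ := by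
    rw [← Set.exists_subset_image_finite_and (p := fun t ↦ Set.range χ ⊆ ⋃ y ∈ t, ball y δ),
      Set.image_univ]
    exact finite_approx_of_totallyBounded hχ δ hδ
  obtain ⟨L, hL, hsL⟩ := hs.isBounded.exists_pos_norm_lt
  refine ⟨L, hL, fun x ↦ ?_⟩
  obtain ⟨p, hp, hxp⟩ : ∃ p ∈ s, dist (χ x) (χ p) < δ := by
    simpa using hcover (Set.mem_range_self x)
  refine ⟨-p + x, by simpa [dist_eq_norm] using hsL p hp, ?_⟩
  calc dist (χ (-p + x)) 1 = dist (χ p * χ (-p + x)) (χ p * 1) := (dist_mul_left _ _ _).symm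
    _ = dist (χ x) (χ p) := by rw [← AddChar.map_add_eq_mul, add_neg_cancel_left, mul_one]
    _ < δ := hxp

lemma isBohrAP_comp_addChar [Group K] [PseudoMetricSpace K] [IsIsometricSMul K K]
    {χ : AddChar V K} (hχ : Continuous χ) (hχK : TotallyBounded (Set.range χ)) {f : K → ℂ}
    (hf : UniformContinuous f) : IsBohrAP fun t ↦ f (χ t) := by
  refine isBohrAP_iff_isRelativelyDense.2 ⟨hf.continuous.comp hχ, fun ε hε ↦ ?_⟩
  obtain ⟨δ, hδ, hfδ⟩ := Metric.uniformContinuous_iff.1 hf ε hε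
  refine (isRelativelyDense_dist_addChar_one_lt hχK hδ).mono fun τ hτ y ↦ hfδ ?_
  calc dist (χ (y + τ)) (χ y) = dist (χ y * χ τ) (χ y * 1) := by
        rw [AddChar.map_add_eq_mul, mul_one]
    _ = dist (χ τ) 1 := dist_mul_left _ _ _
    _ < δ := hτ

lemma IsBohrAP.of_tendstoUniformly {p : Filter ι} [p.NeBot] {F : ι → V → ℂ} {f : V → ℂ}
    (hFf : TendstoUniformly F f p) (hF : ∀ i, IsBohrAP (F i)) : IsBohrAP f := by
  simp only [isBohrAP_iff_isRelativelyDense] at hF ⊢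
  refine ⟨hFf.continuous (.of_forall fun i ↦ (hF i).1), fun ε hε ↦ ?_⟩
  obtain ⟨i, hi⟩ := (Metric.tendstoUniformly_iff.1 hFf (ε / 3) (by positivity)).exists
  refine ((hF i).2 (ε / 3) (by positivity)).mono fun τ hτ y ↦ ?_
  calc dist (f (y + τ)) (f y)
      ≤ dist (f (y + τ)) (F i (y + τ)) + dist (F i (y + τ)) (F i y) + dist (F i y) (f y) :=
        dist_triangle4 _ _ _ _
    _ < ε / 3 + ε / 3 + ε / 3 := by
        gcongr
        · exact hi _
        · exact hτ y
        · exact (dist_comm _ _).trans_lt (hi y)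
    _ = ε := add_thirds ε

instance : IsIsometricSMul Circle Circle :=
  ⟨fun c ↦ .of_dist_eq fun z w ↦ by
    change dist ((c : ℂ) * z) (c * w) = dist (z : ℂ) w
    rw [dist_eq_norm, dist_eq_norm, ← mul_sub, norm_mul, Circle.norm_coe, one_mul]⟩

lemma isBohrAP_sum_addChar (F : Finset ι) (c : ι → ℂ) {χ : ι → AddChar V Circle}
    (hχ : ∀ i, Continuous (χ i)) : IsBohrAP fun t ↦ ∑ i ∈ F, c i * χ i t := by
  let χF : AddChar V (F → Circle) :=
    { toFun := fun t i ↦ χ i t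
      map_zero_eq_one' := by ext; simp
      map_add_eq_mul' := fun s t ↦ by ext; simp [AddChar.map_add_eq_mul] }
  have hχF : Continuous χF := continuous_pi fun i ↦ hχ i
  have hbdd : TotallyBounded (Set.range χF) :=
    isCompact_univ.totallyBounded.subset (Set.subset_univ _)
  have hsum : Continuous fun z : F → Circle ↦ ∑ i : F, c i * (z i : ℂ) := by fun_prop
  simp only [← F.sum_coe_sort _]
  exact isBohrAP_comp_addChar hχF hbdd (CompactSpace.uniformContinuous_of_continuous hsum)

lemma isBohrAP_tsum_addChar {c : ι → ℂ} (hc : Summable fun i ↦ ‖c i‖) {χ : ι → AddChar V Circle}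
    (hχ : ∀ i, Continuous (χ i)) : IsBohrAP fun t ↦ ∑' i, c i * χ i t :=
  .of_tendstoUniformly (tendstoUniformly_tsum hc fun i t ↦ by simp [Circle.norm_coe])
    fun F ↦ isBohrAP_sum_addChar F c hχ

end BohrAlmostPeriodic

lemma PPM.summable_norm_mass_mul {V : Type*} (ν : PPM V) {A : Set V} (hA : ν.var A < ⊤)
    {f : V → ℂ} {C : ℝ} (hfC : ∀ x, ‖f x‖ ≤ C) (hfA : Function.support f ⊆ A) :
    Summable fun x ↦ ‖ν.mass x * f x‖ := by
  have hmass : Summable fun x : A ↦ ‖ν.mass x‖₊ := ENNReal.tsum_coe_ne_top_iff_summable.1 hA.ne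
  have hAsum : Summable fun x : A ↦ ‖ν.mass x * f x‖ := by
    refine .of_nonneg_of_le (fun _ ↦ norm_nonneg _) (fun x ↦ ?_)
      ((NNReal.summable_coe.2 hmass).mul_right C)
    rw [norm_mul, coe_nnnorm]
    gcongr
    exact hfC x
  refine (Subtype.val_injective.summable_iff fun x hx ↦ ?_).1 hAsum
  have hfx : f x = 0 := by
    by_contra hfx
    exact hx ⟨⟨x, hfA hfx⟩, rfl⟩
  simp [hfx]

/-- The convolution `μ ⋆ f`. Its value at `t` is the junk value `0` unless `f (t - ·)` is
`μ`-integrable. -/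
def CMeas.conv {V : Type*} [MeasurableSpace V] [Sub V] (μ : CMeas V) (f : V → ℂ) (t : V) : ℂ :=
  μ.pair fun x ↦ f (t - x)

section Modulation

open scoped FourierTransform

variable {V E : Type*} [NormedAddCommGroup V] [InnerProductSpace ℝ V]

/-- The character `t ↦ e^{2πi t·γ}` of frequency `γ`. -/
def frequencyChar (γ : V) : AddChar V Circle :=
  Real.fourierChar.compAddMonoidHom ((innerₗ V).flip γ).toAddMonoidHom

lemma frequencyChar_apply (γ t : V) :
    (frequencyChar γ t : ℂ) = Complex.exp (((2 * Real.pi * ⟪t, γ⟫ : ℝ) : ℂ) * Complex.I) :=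
  Real.fourierChar_apply _

lemma continuous_frequencyChar (γ : V) : Continuous (frequencyChar γ) :=
  Real.continuous_fourierChar.comp (continuous_id.inner continuous_const)

variable [FiniteDimensional ℝ V] [MeasurableSpace V] [BorelSpace V]
  [NormedAddCommGroup E] [NormedSpace ℂ E]

/-- The modulation `γ ↦ e^{2πi t·γ} φ(γ)` of a Schwartz function, defined as a translation of its
inverse Fourier transform, so that no decay estimate is needed. -/
def modulation (t : V) (φ : 𝓢(V, E)) : 𝓢(V, E) :=
  𝓕 ((𝓕⁻ φ).compSubConstCLM ℂ (-t))

variable [CompleteSpace E]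

lemma modulation_apply (t : V) (φ : 𝓢(V, E)) (γ : V) :
    modulation t φ γ = frequencyChar γ t • φ γ := by
  calc modulation t φ γ = 𝓕 (⇑(𝓕⁻ φ : 𝓢(V, E)) ∘ fun x ↦ x + t) γ := by
        rw [modulation, SchwartzMap.fourier_coe]
        exact congrFun (congrArg 𝓕 (funext fun x ↦ by simp)) γ
    _ = frequencyChar γ t • (𝓕 (𝓕⁻ φ) : 𝓢(V, E)) γ :=
        congrFun (VectorFourier.fourierIntegral_comp_add_right Real.fourierChar volume
          (innerₗ V) _ t) γ
    _ = frequencyChar γ t • φ γ := by rw [FourierTransform.fourier_fourierInv_eq]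

lemma fourier_modulation_apply (t : V) (φ : 𝓢(V, E)) (x : V) :
    (𝓕 (modulation t φ) : 𝓢(V, E)) x = (𝓕⁻ φ : 𝓢(V, E)) (t - x) := by
  calc (𝓕 (modulation t φ) : 𝓢(V, E)) x = (𝓕⁻ (modulation t φ) : 𝓢(V, E)) (-x) := by
        rw [SchwartzMap.fourierInv_coe, Real.fourierInv_eq_fourier_neg, neg_neg,
          SchwartzMap.fourier_coe]
    _ = (𝓕⁻ φ : 𝓢(V, E)) (t - x) := by simp [modulation, neg_add_eq_sub]

lemma hasCompactSupport_modulation {φ : 𝓢(V, E)} (hφ : HasCompactSupport φ) (t : V) :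
    HasCompactSupport (modulation t φ) := by
  have hmod : ⇑(modulation t φ) = (fun γ ↦ frequencyChar γ t) • ⇑φ :=
    funext (modulation_apply t φ)
  exact hmod ▸ hφ.smul_left

end Modulation

open scoped FourierTransform in
theorem statement15_general {V : Type*} [NormedAddCommGroup V] [InnerProductSpace ℝ V]
    [FiniteDimensional ℝ V] [MeasurableSpace V] [BorelSpace V] (μ : CMeas V)
    (hμ : ∀ φ : 𝓢(V, ℂ), Integrable (fun x ↦ φ x * μ.den x) μ.var)
    (ν : PPM V) (hν : ∀ r : ℝ, ν.var (ball 0 r) < ⊤)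
    (hF : ∀ φ : 𝓢(V, ℂ), HasCompactSupport φ → μ.pair (𝓕 φ : 𝓢(V, ℂ)) = ν.pair φ)
    (φ : 𝓢(V, ℂ)) (hφ : HasCompactSupport φ) :
    Summable (fun γ ↦ ‖ν.mass γ * φ γ‖) ∧
      (∀ t, Integrable (fun x ↦ (𝓕⁻ φ : 𝓢(V, ℂ)) (t - x) * μ.den x) μ.var ∧
        μ.conv (𝓕⁻ φ : 𝓢(V, ℂ)) t = ∑' γ, ν.mass γ * φ γ * frequencyChar γ t) ∧
      IsBohrAP (μ.conv (𝓕⁻ φ : 𝓢(V, ℂ))) := by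
  have hsum : Summable fun γ ↦ ‖ν.mass γ * φ γ‖ := by
    obtain ⟨r, hr⟩ := hφ.isCompact.isBounded.subset_ball 0
    obtain ⟨C, hC⟩ := hφ.exists_bound_of_continuous φ.continuous
    exact ν.summable_norm_mass_mul (hν r) hC (subset_closure.trans hr)
  have hconv (t : V) :
      μ.conv (𝓕⁻ φ : 𝓢(V, ℂ)) t = ∑' γ, ν.mass γ * φ γ * frequencyChar γ t :=
    calc μ.conv (𝓕⁻ φ : 𝓢(V, ℂ)) t = μ.pair (𝓕 (modulation t φ) : 𝓢(V, ℂ)) := by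
          simp only [CMeas.conv, ← fourier_modulation_apply]
      _ = ν.pair (modulation t φ) := hF _ (hasCompactSupport_modulation hφ t)
      _ = ∑' γ, ν.mass γ * φ γ * frequencyChar γ t := by
          simp only [PPM.pair, modulation_apply, Circle.smul_def, smul_eq_mul, mul_comm,
            mul_left_comm]
  refine ⟨hsum, fun t ↦ ⟨?_, hconv t⟩, ?_⟩
  · simpa only [fourier_modulation_apply] using hμ (𝓕 (modulation t φ))
  · rw [funext hconv]
    exact isBohrAP_tsum_addChar hsum continuous_frequencyChar

/-- Let `μ` be a temperate complex measure on `ℝ^d` whose Fourier transform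
is the pure point measure `ν = Σ_γ b_γ δ_γ`. Then for every `C^∞` compactly supported `φ`,
`(μ ⋆ φ̌)(t) = Σ_γ b_γ φ(γ) e^{2πi t·γ}` with `Σ_γ |b_γ||φ(γ)| < ∞`; in particular
`μ ⋆ φ̌` is Bohr almost periodic. -/
theorem statement15 {d : ℕ} (μ : CMeas (Ed d)) (hμloc : μ.locFinite) (hμt : μ.temperate)
    (ν : PPM (Ed d)) (hνloc : ν.locFinite)
    (hF : ∀ φ : SchwartzMap (Ed d) ℂ, HasCompactSupport φ →
      μ.pair ⇑(FourierTransform.fourierCLE ℂ (SchwartzMap (Ed d) ℂ) φ) = ν.pair ⇑φ) :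
    ∀ φ : SchwartzMap (Ed d) ℂ, HasCompactSupport φ →
      Summable (fun γ : Ed d => ‖ν.mass γ * φ γ‖) ∧
      (∀ t : Ed d,
        Integrable (fun x => ((FourierTransform.fourierCLE ℂ (SchwartzMap (Ed d) ℂ)).symm φ) (t - x) * μ.den x) μ.var ∧
        (∫ x, ((FourierTransform.fourierCLE ℂ (SchwartzMap (Ed d) ℂ)).symm φ) (t - x) * μ.den x ∂μ.var) =
          ∑' γ : Ed d, ν.mass γ * φ γ *
            Complex.exp (((2 * Real.pi * ⟪t, γ⟫ : ℝ) : ℂ) * Complex.I)) ∧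
      IsBohrAP fun t : Ed d =>
        ∫ x, ((FourierTransform.fourierCLE ℂ (SchwartzMap (Ed d) ℂ)).symm φ) (t - x) * μ.den x ∂μ.var := by
  intro φ hφ
  simpa only [frequencyChar_apply] using! statement15_general μ hμt ν hνloc hF φ hφ

end
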